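/- Let X be a separable and reflexive real Banach space and I ⊆ ℝ an interval. Let Φ : X → ℝ be a C¹ functional that is sequentially weakly lower semicontinuous, bounded on each bounded subset of X, whose derivative Φ' : X → X* admits a continuous inverse on the dual X*, and which has the property that whenever a sequence (uₙ) converges weakly to u in X and liminf Φ(uₙ) ≤ Φ(u), some subsequence of (uₙ) converges strongly to u. Let J : X → ℝ be a C¹ functional whose derivative J' : X → X* is compact (maps bounded sets to relatively compact sets). Assume that for each λ ∈ I the functional Φ − λJ is coercive and has a strict local minimum û_λ which is not a global minimum. Then for each compact interval [a,b] ⊆ I with sup_{λ∈[a,b]} (Φ(û_λ) − λJ(û_λ)) < +∞, there exists γ > 0 with the following property: for every λ ∈ [a,b] and every C¹ functional Ψ : X → ℝ with compact derivative, there exists δ₀ > 0 such that for each μ ∈ [0, δ₀] the equation Φ'(u) = λJ'(u) + μΨ'(u) has at least three solutions in X whose norms are less than γ. -/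

import Mathlib

/-!
Write `E = Φ - λJ`. The solutions are three critical points of the perturbed functional
`E_μ = Φ - H`, where `H = λJ + μ g(Ψ)` and `g` is a bounded `C¹` function whose derivative is `1` on
the range of `Ψ` over the ball of radius `γ`. Since `g` is bounded, `E_μ` is uniformly close to `E`
for small `μ`, so it stays coercive, and inside the ball of radius `γ` its critical points solve the
original equation.

The functional `H` has compact derivative, hence is sequentially weakly continuous
(`CompactC1.weak_continuous`), and `E_μ` attains its minimum on closed balls
(`exists_min_closedBall`). The strict local minimum `û` of `E` is separated from a small sphere around
it by a positive gap (`exists_barrier`). For small `μ` this yields a local minimum of `E_μ` inside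
that sphere, and a minimum at a lower level outside it, because `û` is not a global minimum of `E`.
The third critical point lies at a higher level than both; it comes from the mountain pass theorem
(`exists_mountain_pass_critical`), applied to paths from `û` to a point `v` with `E v < E û`. That
theorem is proved with Ekeland's principle on the space of paths
(`exists_almost_critical_mountain_pass`) and with the Palais–Smale property given by the continuous
inverse of `Φ'` (`exists_critical_of_almost_critical`).

The radius `γ` depends on `a` and `b` only: `Φ - λJ ≥ min (Φ - aJ) (Φ - bJ)`, so coercivity is uniform
in `λ ∈ [a, b]`. The points `û` and `v` then lie in a fixed ball, on which `E` is bounded by a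
constant `M` independent of `λ`, and the three critical levels of `E_μ` are at most `M + 1`.
-/

open Filter Topology Bornology

/-- A sequence `u` in a normed space converges weakly to `v` if `f (u n) → f v`
for every continuous linear functional `f`. -/
def WeaklyConvergentSeq {X : Type*} [NormedAddCommGroup X] [NormedSpace ℝ X]
    (u : ℕ → X) (v : X) : Prop :=
  ∀ f : X →L[ℝ] ℝ, Tendsto (fun n => f (u n)) atTop (𝓝 (f v))

/-! ### Weak convergence in separable reflexive spaces -/

section WeakConvergence
variable {X : Type*} [NormedAddCommGroup X] [NormedSpace ℝ X]

/-- Countably many functionals separate the points of a separable space: take norming functionals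
of the points of a dense sequence. -/
lemma exists_separating_functionals [TopologicalSpace.SeparableSpace X] :
    ∃ f : ℕ → X →L[ℝ] ℝ, ∀ x : X, x ≠ 0 → ∃ n, f n x ≠ 0 := by
  choose f hf1 hf2 using fun n => exists_dual_vector'' ℝ (TopologicalSpace.denseSeq X n)
  refine ⟨f, fun x hx => ?_⟩
  have hpos : 0 < ‖x‖ / 2 := by positivity
  obtain ⟨n, hn⟩ := (TopologicalSpace.denseRange_denseSeq X).exists_dist_lt x hpos
  refine ⟨n, fun h0 => ?_⟩
  set d := TopologicalSpace.denseSeq X n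
  have h2 : f n (d - x) = ‖d‖ := by rw [map_sub, h0, sub_zero, hf2]; rfl
  have h3 : ‖d‖ ≤ ‖d - x‖ := by
    have := (f n).le_of_opNorm_le (hf1 n) (d - x)
    rw [h2, one_mul, norm_norm] at this
    exact this
  rw [dist_eq_norm, norm_sub_rev] at hn
  have h4 : ‖x‖ ≤ ‖d‖ + ‖d - x‖ := by
    have := norm_sub_le d (d - x)
    simpa using this
  linarith

/-- In a separable reflexive space every bounded sequence has a weakly convergent subsequence. By
reflexivity the balls of the bidual are weak-* compact sets of evaluations, and they are metrizable
because countably many functionals separate their points. -/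
lemma exists_weak_subseq [TopologicalSpace.SeparableSpace X]
    (hrefl : Function.Surjective (NormedSpace.inclusionInDoubleDual ℝ X))
    {u : ℕ → X} {R : ℝ} (hu : ∀ n, ‖u n‖ ≤ R) :
    ∃ (v : X) (φ : ℕ → ℕ), StrictMono φ ∧ WeaklyConvergentSeq (u ∘ φ) v := by
  set D := StrongDual ℝ X
  let K : Set (WeakDual ℝ D) := WeakDual.toStrongDual ⁻¹' Metric.closedBall (0 : StrongDual ℝ D) R
  have hK : IsCompact K := WeakDual.isCompact_closedBall 0 R
  have : CompactSpace K := isCompact_iff_compactSpace.mp hK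
  obtain ⟨f, hf⟩ := exists_separating_functionals (X := X)
  have : TopologicalSpace.MetrizableSpace K := by
    refine Metric.PiNatEmbed.TopologicalSpace.MetrizableSpace.of_countable_separating
      (fun n (k : K) => (k : WeakDual ℝ D) (f n))
      (fun n => (WeakDual.eval_continuous (f n)).comp continuous_subtype_val) ?_
    intro x y hxy
    obtain ⟨x', hx'⟩ := hrefl (WeakDual.toStrongDual (x : WeakDual ℝ D))
    obtain ⟨y', hy'⟩ := hrefl (WeakDual.toStrongDual (y : WeakDual ℝ D))
    have hne : x' - y' ≠ 0 := by
      intro h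
      apply hxy
      apply Subtype.ext
      apply WeakDual.toStrongDual.injective
      rw [← hx', ← hy', sub_eq_zero.mp h]
    obtain ⟨n, hn⟩ := hf _ hne
    refine ⟨n, fun h => hn ?_⟩
    have h1 : (x : WeakDual ℝ D) (f n) = f n x' := by
      have := congrArg (fun g => g (f n)) hx'
      exact this.symm
    have h2 : (y : WeakDual ℝ D) (f n) = f n y' := by
      have := congrArg (fun g => g (f n)) hy'
      exact this.symm
    rw [map_sub, ← h1, ← h2, sub_eq_zero]
    exact h
  let w : ℕ → K := fun n =>
    ⟨StrongDual.toWeakDual (NormedSpace.inclusionInDoubleDual ℝ X (u n)), by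
      have : ‖NormedSpace.inclusionInDoubleDual ℝ X (u n)‖ ≤ R :=
        (NormedSpace.double_dual_bound ℝ X (u n)).trans (hu n)
      exact (dist_zero_right (NormedSpace.inclusionInDoubleDual ℝ X (u n))).trans_le this⟩
  obtain ⟨k, φ, hφ, hk⟩ := CompactSpace.tendsto_subseq w
  obtain ⟨v, hv⟩ := hrefl (WeakDual.toStrongDual (k : WeakDual ℝ D))
  refine ⟨v, φ, hφ, fun g => ?_⟩
  have h1 : (k : WeakDual ℝ D) g = g v := by
    have := congrArg (fun F => F g) hv
    exact this.symm
  have h2 := (((WeakDual.eval_continuous g).comp continuous_subtype_val).tendsto k).comp hk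
  rw [← h1]
  exact h2

/-- Closed balls are sequentially weakly closed. -/
lemma WeaklyConvergentSeq.norm_sub_le {u : ℕ → X} {v x : X} {r : ℝ}
    (h : WeaklyConvergentSeq u v) (hu : ∀ n, ‖u n - x‖ ≤ r) : ‖v - x‖ ≤ r := by
  obtain ⟨f, hf1, hf2⟩ := exists_dual_vector'' ℝ (v - x)
  have h1 : Tendsto (fun n => f (u n - x)) atTop (𝓝 (f (v - x))) := by
    simp only [map_sub]
    exact (h f).sub_const _
  rw [hf2] at h1
  refine le_of_tendsto h1 (Eventually.of_forall fun n => ?_)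
  have := (f.le_of_opNorm_le hf1 (u n - x))
  rw [one_mul] at this
  exact (le_abs_self _).trans (this.trans (hu n))

lemma WeaklyConvergentSeq.comp {u : ℕ → X} {v : X} (h : WeaklyConvergentSeq u v)
    {φ : ℕ → ℕ} (hφ : StrictMono φ) : WeaklyConvergentSeq (u ∘ φ) v :=
  fun f => (h f).comp hφ.tendsto_atTop

/-! ### Functionals with compact derivative -/

/-- `H` is of class `C¹` with derivative `H'`, and `H'` maps bounded sets to relatively compact
sets. -/
structure CompactC1 (H : X → ℝ) (H' : X → X →L[ℝ] ℝ) : Prop where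
  deriv : ∀ u, HasFDerivAt H (H' u) u
  cont : Continuous H'
  compact : ∀ s : Set X, IsBounded s → IsCompact (closure (H' '' s))

namespace CompactC1
variable {H G : X → ℝ} {H' G' : X → X →L[ℝ] ℝ}

lemma continuous (hH : CompactC1 H H') : Continuous H :=
  continuous_iff_continuousAt.2 fun u => (hH.deriv u).continuousAt

/-- Mean value theorem on a closed ball. -/
lemma mvt (hH : CompactC1 H H') {x : X} {r : ℝ} {u v : X} (hu : ‖u - x‖ ≤ r) (hv : ‖v - x‖ ≤ r) :
    ∃ z, ‖z - x‖ ≤ r ∧ H v - H u = H' z (v - u) := by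
  obtain ⟨z, hz, h⟩ := domain_mvt (f := H) (f' := H') (s := Metric.closedBall x r) (x := u) (y := v)
    (fun y _ => (hH.deriv y).hasFDerivWithinAt) (convex_closedBall x r)
    (by simpa [dist_eq_norm] using hu) (by simpa [dist_eq_norm] using hv)
  refine ⟨z, ?_, h⟩
  have := (convex_closedBall x r).segment_subset (by simpa [dist_eq_norm] using hu)
    (by simpa [dist_eq_norm] using hv) hz
  simpa [dist_eq_norm] using this

lemma bounded (hH : CompactC1 H H') (R : ℝ) : ∃ C, ∀ u, ‖u‖ ≤ R → |H u| ≤ C := by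
  obtain ⟨B, hB⟩ := (hH.compact (Metric.closedBall 0 R) Metric.isBounded_closedBall).isBounded.exists_norm_le
  refine ⟨|H 0| + B * R, fun u hu => ?_⟩
  have hR : 0 ≤ R := (norm_nonneg u).trans hu
  obtain ⟨z, hz, h⟩ := hH.mvt (x := 0) (r := R) (u := 0) (v := u) (by simpa) (by simpa)
  have h1 : ‖H' z‖ ≤ B := hB _ (subset_closure ⟨z, by simpa using hz, rfl⟩)
  have h2 : |H u - H 0| ≤ B * R := by
    rw [h, sub_zero]
    exact ((H' z).le_of_opNorm_le h1 u).trans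
      (mul_le_mul_of_nonneg_left hu ((norm_nonneg _).trans h1))
  have := abs_sub_abs_le_abs_sub (H u) (H 0)
  linarith

/-- A functional with compact derivative is sequentially weakly continuous: by the mean value
theorem `H (u n) - H v = H' z (u n - v)` with `H' z` in a compact set, on which the pointwise
convergence of functionals at the bounded sequence `u n - v` is uniform. -/
lemma weak_continuous (hH : CompactC1 H H') {u : ℕ → X} {v : X} {R : ℝ}
    (h : WeaklyConvergentSeq u v) (hu : ∀ n, ‖u n‖ ≤ R) :
    Tendsto (fun n => H (u n)) atTop (𝓝 (H v)) := by
  have hv : ‖v‖ ≤ R := by simpa using h.norm_sub_le (x := 0) (by simpa using hu)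
  set K := closure (H' '' Metric.closedBall 0 R)
  have hK : IsCompact K := hH.compact _ Metric.isBounded_closedBall
  have hR : 0 ≤ R := (norm_nonneg v).trans hv
  rw [Metric.tendsto_atTop]
  intro ε hε
  -- a finite `δ`-net of the compact set of derivatives
  set δ := ε / (4 * R + 1) with hδ
  have hδ0 : 0 < δ := by positivity
  obtain ⟨t, -, htfin, ht⟩ := hK.finite_cover_balls hδ0
  have hev : ∀ᶠ n in atTop, ∀ f ∈ t, |f (u n) - f v| < ε / 2 := by
    rw [eventually_all_finite htfin]
    intro f _
    have := (Metric.tendsto_nhds.1 (h f)) (ε / 2) (by positivity)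
    simpa [Real.dist_eq] using this
  obtain ⟨N, hN⟩ := eventually_atTop.1 hev
  refine ⟨N, fun n hn => ?_⟩
  obtain ⟨z, hz, hzeq⟩ := hH.mvt (x := 0) (r := R) (u := v) (v := u n)
    (by simpa using hv) (by simpa using hu n)
  have hzK : H' z ∈ K := subset_closure ⟨z, by simpa using hz, rfl⟩
  obtain ⟨f, hft, hf⟩ := Set.mem_iUnion₂.1 (ht hzK)
  rw [Metric.mem_ball, dist_eq_norm] at hf
  have h1 : |(H' z - f) (u n - v)| ≤ δ * (2 * R) := by
    refine ((H' z - f).le_of_opNorm_le hf.le (u n - v)).trans ?_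
    gcongr
    exact (norm_sub_le _ _).trans (by linarith [hu n])
  have h2 := hN n hn f hft
  rw [← map_sub] at h2
  rw [Real.dist_eq, hzeq]
  have h3 : H' z (u n - v) = (H' z - f) (u n - v) + f (u n - v) := by simp
  have h4 : δ * (2 * R) < ε / 2 := by
    rw [hδ, div_mul_eq_mul_div, div_lt_div_iff₀ (by positivity) (by positivity)]
    nlinarith
  rw [h3]
  exact (abs_add_le _ _).trans_lt (by linarith)

lemma smul (hH : CompactC1 H H') (c : ℝ) : CompactC1 (fun u => c * H u) (fun u => c • H' u) where
  deriv u := (hH.deriv u).const_mul c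
  cont := hH.cont.const_smul c
  compact s hs := by
    refine ((hH.compact s hs).image (continuous_const_smul c)).closure_of_subset ?_
    rintro _ ⟨x, hx, rfl⟩
    exact ⟨_, subset_closure ⟨x, hx, rfl⟩, rfl⟩

lemma add (hH : CompactC1 H H') (hG : CompactC1 G G') :
    CompactC1 (fun u => H u + G u) (fun u => H' u + G' u) where
  deriv u := (hH.deriv u).add (hG.deriv u)
  cont := hH.cont.add hG.cont
  compact s hs := by
    refine ((hH.compact s hs).add (hG.compact s hs)).closure_of_subset ?_
    rintro _ ⟨x, hx, rfl⟩
    exact Set.add_mem_add (subset_closure ⟨x, hx, rfl⟩) (subset_closure ⟨x, hx, rfl⟩)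

/-- Composition with a `C¹` function of one real variable. -/
lemma comp_left (hH : CompactC1 H H') {g g' : ℝ → ℝ} (hg : ∀ t, HasDerivAt g (g' t) t)
    (hg' : Continuous g') : CompactC1 (fun u => g (H u)) (fun u => g' (H u) • H' u) where
  deriv u := (hg (H u)).comp_hasFDerivAt u (hH.deriv u)
  cont := (hg'.comp hH.continuous).smul hH.cont
  compact s hs := by
    obtain ⟨R, hR⟩ := hs.exists_norm_le
    obtain ⟨C, hC⟩ := hH.bounded R
    refine ((((isCompact_Icc (a := -C) (b := C)).image hg').prod (hH.compact s hs)).image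
      continuous_smul).closure_of_subset ?_
    rintro _ ⟨x, hx, rfl⟩
    exact ⟨(g' (H x), H' x), ⟨⟨H x, abs_le.1 (hC x (hR x hx)), rfl⟩,
      subset_closure ⟨x, hx, rfl⟩⟩, rfl⟩

end CompactC1

/-- A bounded `C¹` function with derivative `1` on `[-k, k]`, namely `t ↦ t χ(t)` for a smooth
bump function `χ`. -/
lemma exists_truncation (k : ℝ) : ∃ g g' : ℝ → ℝ, (∀ t, HasDerivAt g (g' t) t) ∧ Continuous g' ∧
    (∃ C, ∀ t, |g t| ≤ C) ∧ ∀ t, |t| ≤ k → g' t = 1 := by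
  let χ : ContDiffBump (0 : ℝ) := ⟨|k| + 1, |k| + 2, by positivity, by linarith⟩
  let g : ℝ → ℝ := fun t => t * χ t
  have hg : ContDiff ℝ 1 g := contDiff_id.mul χ.contDiff
  have hsupp : HasCompactSupport g := χ.hasCompactSupport.mul_left
  obtain ⟨C, hC⟩ := hsupp.exists_bound_of_continuous hg.continuous
  refine ⟨g, deriv g, fun t => (hg.differentiable (by simp) t).hasDerivAt,
    hg.continuous_deriv le_rfl, ⟨C, hC⟩, fun t ht => ?_⟩
  have : g =ᶠ[𝓝 t] id := by
    have hmem : Metric.ball (0 : ℝ) (|k| + 1) ∈ 𝓝 t :=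
      Metric.isOpen_ball.mem_nhds (by
        simp only [Metric.mem_ball, dist_zero_right, Real.norm_eq_abs]
        linarith [le_abs_self k])
    filter_upwards [hmem] with s hs
    simp [g, χ.one_of_mem_closedBall (Metric.ball_subset_closedBall hs)]
  rw [this.deriv_eq, deriv_id]

end WeakConvergence

/-! ### Mountain pass principle -/

section MountainPass

/-- A form of Ekeland's variational principle. The point is the limit of a sequence whose next term
almost minimizes `F` on `{y | F y + σ d(x, y) ≤ F x}`. -/
lemma exists_ekeland_point {Y : Type*} [MetricSpace Y] [CompleteSpace Y] {F : Y → ℝ}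
    (hF : LowerSemicontinuous F) (hb : BddBelow (Set.range F)) {σ : ℝ} (hσ : 0 < σ) (y₀ : Y) :
    ∃ p, F p ≤ F y₀ ∧ ∀ q, F p ≤ F q + σ * dist p q := by
  let S : Y → Set Y := fun x => {y | F y + σ * dist x y ≤ F x}
  have hself : ∀ x, x ∈ S x := fun x => by simp [S]
  have hbS : ∀ x, BddBelow (F '' S x) := fun x => hb.mono (Set.image_subset_range _ _)
  have hstep : ∀ (x : Y) (n : ℕ), ∃ y ∈ S x, ∀ q ∈ S x, F y ≤ F q + (1 / 2 : ℝ) ^ n := by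
    intro x n
    obtain ⟨_, ⟨y, hy, rfl⟩, hlt⟩ := exists_lt_of_csInf_lt (s := F '' S x)
      ⟨_, x, hself x, rfl⟩ (lt_add_of_pos_right (sInf (F '' S x)) (by positivity : (0:ℝ) < (1 / 2) ^ n))
    exact ⟨y, hy, fun q hq => by
      have := csInf_le (hbS x) ⟨q, hq, rfl⟩
      linarith⟩
  choose next hnext hmin using hstep
  let x : ℕ → Y := fun n => Nat.rec y₀ (fun n y => next y n) n
  have hx : ∀ n, x (n + 1) = next (x n) n := fun n => rfl
  have htrans : ∀ {a b c}, b ∈ S a → c ∈ S b → c ∈ S a := by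
    intro a b c hab hbc
    simp only [S, Set.mem_ofPred_eq] at *
    nlinarith [dist_triangle a b c]
  have hmem : ∀ n m, n ≤ m → x m ∈ S (x n) := by
    intro n m hnm
    induction m, hnm using Nat.le_induction with
    | base => exact hself _
    | succ m _ ih => exact htrans ih (hx m ▸ hnext _ _)
  have hanti : Antitone (fun n => F (x n)) := fun n m hnm => by
    have : F (x m) + σ * dist (x n) (x m) ≤ F (x n) := hmem n m hnm
    have h0 : 0 ≤ σ * dist (x n) (x m) := by positivity
    show F (x m) ≤ F (x n)
    linarith
  have hbx : BddBelow (Set.range fun n => F (x n)) := hb.mono (by rintro _ ⟨n, rfl⟩; exact ⟨_, rfl⟩)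
  have hlim := tendsto_atTop_ciInf hanti hbx
  set L := ⨅ n, F (x n)
  have hLle : ∀ n, L ≤ F (x n) := fun n => ciInf_le hbx n
  have hcauchy : CauchySeq x := by
    have hz : Tendsto (fun n => (F (x n) - L) / σ) atTop (𝓝 0) := by
      simpa using (hlim.sub_const L).div_const σ
    refine cauchySeq_of_le_tendsto_0' _ (fun n m hnm => ?_) hz
    rw [le_div_iff₀ hσ]
    have : F (x m) + σ * dist (x n) (x m) ≤ F (x n) := hmem n m hnm
    linarith [hLle m]
  obtain ⟨p, hp⟩ := cauchySeq_tendsto_of_complete hcauchy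
  have hpS : ∀ n, p ∈ S (x n) := by
    intro n
    have hclosed : IsClosed (S (x n)) := by
      have : LowerSemicontinuous fun y => F y + σ * dist (x n) y :=
        hF.add (Continuous.lowerSemicontinuous (by fun_prop))
      exact this.isClosed_preimage (F (x n))
    exact hclosed.mem_of_tendsto hp (eventually_atTop.2 ⟨n, fun m hm => hmem n m hm⟩)
  have hp₀ : F p ≤ F y₀ := by
    have : F p + σ * dist y₀ p ≤ F y₀ := hpS 0
    have h0 : 0 ≤ σ * dist y₀ p := by positivity
    linarith
  refine ⟨p, hp₀, fun q => ?_⟩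
  by_cases hq : q ∈ S p
  · have h1 : ∀ n, L ≤ F q + (1 / 2 : ℝ) ^ n := fun n =>
      (hLle (n + 1)).trans (hx n ▸ hmin (x n) n q (htrans (hpS n) hq))
    have h2 : L ≤ F q := by
      have h3 : Tendsto (fun n : ℕ => F q + (1 / 2 : ℝ) ^ n) atTop (𝓝 (F q + 0)) :=
        (tendsto_pow_atTop_nhds_zero_of_lt_one (by norm_num) (by norm_num)).const_add _
      simpa using ge_of_tendsto' h3 h1
    have h3 : F p ≤ L := by
      refine ge_of_tendsto' hlim fun n => ?_
      have : F p + σ * dist (x n) p ≤ F (x n) := hpS n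
      have h0 : 0 ≤ σ * dist (x n) p := by positivity
      linarith
    have h0 : 0 ≤ σ * dist p q := by positivity
    linarith
  · simp only [S, Set.mem_ofPred_eq, not_le] at hq
    exact hq.le

variable {X : Type*} [NormedAddCommGroup X] [NormedSpace ℝ X]

/-- A direction of steep increase; its opposite is a descent direction. -/
lemma exists_steep_direction {f : X →L[ℝ] ℝ} {σ : ℝ} (hf : σ < ‖f‖) :
    ∃ v, ‖v‖ ≤ 1 ∧ σ < f v := by
  obtain ⟨v, hv, hlt⟩ := f.exists_lt_apply_of_lt_opNorm hf
  rw [Real.norm_eq_abs] at hlt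
  rcases lt_abs.1 hlt with h | h
  · exact ⟨v, hv.le, h⟩
  · exact ⟨-v, by simpa using hv.le, by simpa using h⟩

/-- If the height `M` of a path `p` cannot be lowered faster than at rate `σ` in the sup distance of
paths with the same endpoints, then some high point of `p` is almost critical. Otherwise a
partition of unity along `p` gives a field of directions `v` with `E' (p t) (v t) > σ` on the high
part of `p`, and `p - s v` for small `s > 0` lowers the height too much. -/
lemma exists_almost_critical_on_path {E : X → ℝ} {E' : X → X →L[ℝ] ℝ}
    (hE : ∀ u, HasFDerivAt E (E' u) u) (hE' : Continuous E') (p : C(unitInterval, X)) {M η σ : ℝ}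
    (hη : 0 < η) (hσ : 0 < σ) (hM0 : E (p 0) < M - η) (hM1 : E (p 1) < M - η)
    (hMp : ∀ t, E (p t) ≤ M)
    (hek : ∀ q : C(unitInterval, X), q 0 = p 0 → q 1 = p 1 → ∃ t, M ≤ E (q t) + σ * dist p q) :
    ∃ t, M - η ≤ E (p t) ∧ ‖E' (p t)‖ ≤ σ := by
  by_contra! hcon
  have hEc : Continuous E := continuous_iff_continuousAt.2 fun u => (hE u).continuousAt
  -- a continuous field of directions of increase along the high part of the path,
  -- vanishing at the endpoints
  obtain ⟨v, hv⟩ : ∃ v : C(unitInterval, X), ∀ t, v t ∈ {w : X | ‖w‖ ≤ 1 ∧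
      (M - η ≤ E (p t) → σ < E' (p t) w) ∧ (t = 0 ∨ t = 1 → w = 0)} := by
    refine exists_continuous_forall_mem_convex_of_local_const (fun t => ?_) (fun t => ?_)
    · rintro w₁ ⟨ha₁, hb₁, hc₁⟩ w₂ ⟨ha₂, hb₂, hc₂⟩ a b ha hb hab
      refine ⟨?_, fun h => ?_, fun h => ?_⟩
      · calc ‖a • w₁ + b • w₂‖ ≤ ‖a • w₁‖ + ‖b • w₂‖ := norm_add_le _ _
          _ = a * ‖w₁‖ + b * ‖w₂‖ := by
            rw [norm_smul, norm_smul, Real.norm_of_nonneg ha, Real.norm_of_nonneg hb]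
          _ ≤ a * 1 + b * 1 := by gcongr
          _ = 1 := by linarith
      · exact (convex_Ioi σ).is_linear_preimage (E' (p t)).isBoundedLinearMap.toIsLinearMap
          (hb₁ h) (hb₂ h) ha hb hab
      · simp [hc₁ h, hc₂ h]
    · by_cases ht : M - η ≤ E (p t)
      · obtain ⟨w, hw1, hw2⟩ := exists_steep_direction (hcon t ht)
        refine ⟨w, ?_⟩
        have h1 : ∀ᶠ s in 𝓝 t, σ < E' (p s) w :=
          (((hE'.comp p.continuous).clm_apply continuous_const).tendsto t).eventually_const_lt hw2
        have h2 : ∀ᶠ s in 𝓝 t, s ≠ 0 := isOpen_ne.mem_nhds (by rintro rfl; linarith)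
        have h3 : ∀ᶠ s in 𝓝 t, s ≠ 1 := isOpen_ne.mem_nhds (by rintro rfl; linarith)
        filter_upwards [h1, h2, h3] with s hs1 hs2 hs3
        exact ⟨hw1, fun _ => hs1, fun h => (h.elim hs2 hs3).elim⟩
      · refine ⟨0, ?_⟩
        have h1 : ∀ᶠ s in 𝓝 t, E (p s) < M - η :=
          ((hEc.comp p.continuous).tendsto t).eventually_lt_const (not_le.1 ht)
        filter_upwards [h1] with s hs
        exact ⟨by simp, fun h => absurd h (not_le.2 hs), fun _ => rfl⟩
  simp only [Set.mem_ofPred_eq] at hv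
  have hv1 : ∀ t, ‖v t‖ ≤ 1 := fun t => (hv t).1
  have hcontpt : Continuous fun z : ℝ × unitInterval => p z.2 - z.1 • v z.2 := by fun_prop
  have key1 : ∀ᶠ θ in 𝓝 (0 : ℝ), ∀ t ∈ (Set.univ : Set unitInterval),
      M - η ≤ E (p t) → σ < E' (p t - θ • v t) (v t) := by
    refine isCompact_univ.eventually_forall_of_forall_eventually fun t _ => ?_
    by_cases ht : M - η ≤ E (p t)
    · have hc : Continuous fun z : ℝ × unitInterval => E' (p z.2 - z.1 • v z.2) (v z.2) :=
        (hE'.comp hcontpt).clm_apply (by fun_prop)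
      have := (hc.tendsto (0, t)).eventually_const_lt (u := σ) (by simpa using (hv t).2.1 ht)
      filter_upwards [this] with z hz _ using hz
    · have hc : Continuous fun z : ℝ × unitInterval => E (p z.2) := hEc.comp (by fun_prop)
      have := (hc.tendsto (0, t)).eventually_lt_const (not_le.1 ht)
      filter_upwards [this] with z hz h using absurd h (not_le.2 hz)
  have key2 : ∀ᶠ θ in 𝓝 (0 : ℝ), ∀ t ∈ (Set.univ : Set unitInterval),
      E (p t) < M - η → E (p t - θ • v t) < M - η / 2 := by
    refine isCompact_univ.eventually_forall_of_forall_eventually fun t _ => ?_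
    by_cases ht : E (p t) < M - η / 2
    · have hc : Continuous fun z : ℝ × unitInterval => E (p z.2 - z.1 • v z.2) := hEc.comp hcontpt
      have := (hc.tendsto (0, t)).eventually_lt_const (u := M - η / 2) (by simpa using ht)
      filter_upwards [this] with z hz _ using hz
    · have hc : Continuous fun z : ℝ × unitInterval => E (p z.2) := hEc.comp (by fun_prop)
      have := (hc.tendsto (0, t)).eventually_const_lt (u := M - η)
        (by simp only; linarith)
      filter_upwards [this] with z hz h using absurd h (not_lt.2 hz.le)
  obtain ⟨δ, hδ, hball⟩ := Metric.eventually_nhds_iff.1 (key1.and key2)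
  -- the step length: small enough for both estimates and for `σ * s < η / 2`
  obtain ⟨s, hs0, hsδ, hsη⟩ : ∃ s : ℝ, 0 < s ∧ s < δ ∧ σ * s < η / 2 := by
    refine ⟨min (δ / 2) (η / (4 * σ)), by positivity,
      (min_le_left _ _).trans_lt (by linarith), ?_⟩
    calc σ * min (δ / 2) (η / (4 * σ)) ≤ σ * (η / (4 * σ)) := by gcongr; exact min_le_right _ _
      _ = η / 4 := by field_simp
      _ < η / 2 := by linarith
  let q : C(unitInterval, X) := p - s • v
  have hq : ∀ t, q t = p t - s • v t := fun t => rfl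
  have hdist : dist p q ≤ s := by
    rw [ContinuousMap.dist_le hs0.le]
    intro t
    rw [hq, dist_eq_norm, sub_sub_cancel, norm_smul, Real.norm_of_nonneg hs0.le]
    nlinarith [hv1 t]
  obtain ⟨t, ht⟩ := hek q (by rw [hq, (hv 0).2.2 (Or.inl rfl)]; simp)
    (by rw [hq, (hv 1).2.2 (Or.inr rfl)]; simp)
  have hsd : σ * dist p q ≤ σ * s := by gcongr
  rw [hq] at ht
  by_cases hlev : M - η ≤ E (p t)
  · obtain ⟨z, hz, hzeq⟩ := domain_mvt (f := E) (f' := E') (s := Set.univ) (x := p t)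
      (y := p t - s • v t) (fun y _ => (hE y).hasFDerivWithinAt) convex_univ trivial trivial
    rw [segment_eq_image'] at hz
    obtain ⟨τ, ⟨hτ0, hτ1⟩, rfl⟩ := hz
    have hθ : dist (τ * s) 0 < δ := by
      rw [Real.dist_eq, sub_zero, abs_of_nonneg (by positivity)]
      nlinarith
    have h1 := (hball hθ).1 t trivial hlev
    have h2 : p t + τ • (p t - s • v t - p t) = p t - (τ * s) • v t := by
      rw [sub_sub_cancel_left, smul_neg, smul_smul, sub_eq_add_neg]
    beta_reduce at hzeq
    rw [h2, sub_sub_cancel_left, map_neg, map_smul, smul_eq_mul] at hzeq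
    nlinarith [hMp t]
  · have hθ : dist s 0 < δ := by rwa [Real.dist_eq, sub_zero, abs_of_pos hs0]
    have := (hball hθ).2 t trivial (not_le.1 hlev)
    linarith

/-- Mountain pass principle without compactness: Ekeland's principle is applied to the height
`p ↦ max E ∘ p` on the complete space of paths from `x₀` to `x₁`, starting from the segment. -/
lemma exists_almost_critical_mountain_pass [CompleteSpace X] {E : X → ℝ} {E' : X → X →L[ℝ] ℝ}
    (hE : ∀ u, HasFDerivAt E (E' u) u) (hE' : Continuous E') {x₀ x₁ : X} {r c M η σ : ℝ}
    (hr : 0 ≤ r) (hη : 0 < η) (hσ : 0 < σ) (hx₁ : r ≤ ‖x₁ - x₀‖)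
    (hc : ∀ w, ‖w - x₀‖ = r → c ≤ E w) (h0 : E x₀ < c - η) (h1 : E x₁ < c - η)
    (hM : ∀ w ∈ segment ℝ x₀ x₁, E w ≤ M) :
    ∃ u, c - η ≤ E u ∧ E u ≤ M ∧ ‖E' u‖ ≤ σ := by
  have hEc : Continuous E := continuous_iff_continuousAt.2 fun u => (hE u).continuousAt
  let P : Set C(unitInterval, X) := {p | p 0 = x₀ ∧ p 1 = x₁}
  have hPclosed : IsClosed P :=
    (isClosed_eq (by fun_prop) continuous_const).inter (isClosed_eq (by fun_prop) continuous_const)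
  have : CompleteSpace P := hPclosed.completeSpace_coe
  let F : P → ℝ := fun p => ⨆ t, E (p.1 t)
  have hbdd : ∀ p : C(unitInterval, X), BddAbove (Set.range fun t => E (p t)) := fun p =>
    (isCompact_range (hEc.comp p.continuous)).bddAbove
  have hle : ∀ (p : P) t, E (p.1 t) ≤ F p := fun p t => le_ciSup (hbdd p.1) t
  have hmax : ∀ p : P, ∃ t, E (p.1 t) = F p := by
    intro p
    obtain ⟨t, -, ht⟩ := isCompact_univ.exists_isMaxOn Set.univ_nonempty
      (hEc.comp p.1.continuous).continuousOn
    exact ⟨t, le_antisymm (hle p t) (ciSup_le fun s => ht trivial)⟩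
  have hlsc : LowerSemicontinuous F := by
    rw [lowerSemicontinuous_iff_isClosed_preimage]
    intro y
    have : F ⁻¹' Set.Iic y = ⋂ t, {p : P | E (p.1 t) ≤ y} := by
      ext p
      simp only [Set.mem_preimage, Set.mem_Iic, Set.mem_iInter, Set.mem_ofPred_eq]
      exact ⟨fun h t => (hle p t).trans h, fun h => ciSup_le h⟩
    rw [this]
    exact isClosed_iInter fun t => isClosed_le (hEc.comp (by fun_prop)) continuous_const
  -- every admissible path crosses the sphere
  have hcF : ∀ p : P, c ≤ F p := by
    intro p
    have hcont : Continuous fun t => ‖p.1 t - x₀‖ := by fun_prop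
    obtain ⟨t, ht⟩ := intermediate_value_univ (0 : unitInterval) 1 hcont
      (show r ∈ Set.Icc _ _ by simpa [p.2.1, p.2.2] using ⟨hr, hx₁⟩)
    exact (hc _ ht).trans (hle p t)
  let p₀ : C(unitInterval, X) := ⟨fun t => AffineMap.lineMap x₀ x₁ (t : ℝ), by
    simp only [AffineMap.lineMap_apply_module']
    fun_prop⟩
  have hp₀ : p₀ ∈ P := by simp [P, p₀]
  obtain ⟨p, hp, hpe⟩ := exists_ekeland_point hlsc ⟨c, by rintro _ ⟨p, rfl⟩; exact hcF p⟩ hσ ⟨p₀, hp₀⟩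
  have hFp₀ : F ⟨p₀, hp₀⟩ ≤ M := ciSup_le fun t => hM _ (by
    rw [segment_eq_image_lineMap]
    exact ⟨t, t.2, rfl⟩)
  have hcp := hcF p
  obtain ⟨t, ht1, ht2⟩ := exists_almost_critical_on_path hE hE' p.1 hη hσ (M := F p)
    (by rw [p.2.1]; linarith) (by rw [p.2.2]; linarith) (hle p) (by
      intro q hq0 hq1
      have hqP : q ∈ P := ⟨hq0.trans p.2.1, hq1.trans p.2.2⟩
      obtain ⟨t, ht⟩ := hmax ⟨q, hqP⟩
      exact ⟨t, by have := hpe ⟨q, hqP⟩; rwa [← ht] at this⟩)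
  exact ⟨p.1 t, by linarith, (hle p t).trans (hp.trans hFp₀), ht2⟩

end MountainPass

/-! ### Minima and critical points of `Φ - H` -/

section CriticalPoints
variable {X : Type*} [NormedAddCommGroup X] [NormedSpace ℝ X]
  {Φ H : X → ℝ} {Φ' H' : X → X →L[ℝ] ℝ}

/-- A bounded sequence along which `Φ - H` converges to `ℓ` has a weakly convergent subsequence, with
limit at level at most `ℓ`. -/
lemma exists_weak_limit_of_levels [TopologicalSpace.SeparableSpace X]
    (hrefl : Function.Surjective (NormedSpace.inclusionInDoubleDual ℝ X))
    (hΦwlsc : ∀ (u : ℕ → X) (v : X), WeaklyConvergentSeq u v →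
      Φ v ≤ liminf (fun n => Φ (u n)) atTop)
    (hH : CompactC1 H H') {u : ℕ → X} {R ℓ : ℝ} (hu : ∀ n, ‖u n‖ ≤ R)
    (hlim : Tendsto (fun n => Φ (u n) - H (u n)) atTop (𝓝 ℓ)) :
    ∃ (v : X) (φ : ℕ → ℕ), StrictMono φ ∧ WeaklyConvergentSeq (u ∘ φ) v ∧ Φ v - H v ≤ ℓ ∧
      Tendsto (fun n => Φ (u (φ n))) atTop (𝓝 (ℓ + H v)) := by
  obtain ⟨v, φ, hφ, hw⟩ := exists_weak_subseq hrefl hu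
  have h1 : Tendsto (fun n => Φ (u (φ n))) atTop (𝓝 (ℓ + H v)) := by
    have h2 := hH.weak_continuous hw (fun n => hu (φ n))
    have h3 := (hlim.comp hφ.tendsto_atTop).add h2
    simpa [Function.comp_def] using h3
  have h4 := hΦwlsc _ _ hw
  have h5 : liminf (fun n => Φ ((u ∘ φ) n)) atTop = ℓ + H v := h1.liminf_eq
  exact ⟨v, φ, hφ, hw, by linarith, h1⟩

/-- Direct method: `Φ - H` attains its minimum on every closed ball. -/
lemma exists_min_closedBall [TopologicalSpace.SeparableSpace X]
    (hrefl : Function.Surjective (NormedSpace.inclusionInDoubleDual ℝ X))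
    (hΦwlsc : ∀ (u : ℕ → X) (v : X), WeaklyConvergentSeq u v →
      Φ v ≤ liminf (fun n => Φ (u n)) atTop)
    (hΦbdd : ∀ s : Set X, IsBounded s → IsBounded (Φ '' s))
    (hH : CompactC1 H H') (x : X) {r : ℝ} (hr : 0 ≤ r) :
    ∃ w, ‖w - x‖ ≤ r ∧ ∀ y, ‖y - x‖ ≤ r → Φ w - H w ≤ Φ y - H y := by
  have hnorm : ∀ y, ‖y - x‖ ≤ r → ‖y‖ ≤ r + ‖x‖ := fun y hy => by
    have := norm_add_le (y - x) x
    rw [sub_add_cancel] at this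
    linarith
  let S : Set ℝ := (fun y => Φ y - H y) '' {y | ‖y - x‖ ≤ r}
  obtain ⟨A, hA⟩ := (hΦbdd _ (Metric.isBounded_closedBall (x := (0 : X)) (r := r + ‖x‖))).exists_norm_le
  obtain ⟨B, hB⟩ := hH.bounded (r + ‖x‖)
  have hSb : BddBelow S := by
    refine ⟨-A - B, ?_⟩
    rintro _ ⟨y, hy, rfl⟩
    have h1 := hA _ ⟨y, by simpa using hnorm y hy, rfl⟩
    have h2 := hB y (hnorm y hy)
    rw [Real.norm_eq_abs] at h1
    have := (abs_le.1 h1).1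
    have := (abs_le.1 h2).2
    show -A - B ≤ Φ y - H y
    linarith
  have hSn : S.Nonempty := ⟨_, x, by simpa using hr, rfl⟩
  obtain ⟨a, -, halim, haS⟩ := exists_seq_tendsto_sInf hSn hSb
  choose u hu hua using haS
  obtain ⟨v, φ, -, hw, hle, -⟩ := exists_weak_limit_of_levels hrefl hΦwlsc hH
    (fun n => hnorm _ (hu n)) (halim.congr fun n => (hua n).symm)
  exact ⟨v, hw.norm_sub_le fun n => hu _, fun y hy => hle.trans (csInf_le hSb ⟨y, hy, rfl⟩)⟩

/-- A strict minimum over a closed ball is separated from the bounding sphere by a positive gap,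
although spheres are not weakly closed. A sequence on the sphere whose levels approach the minimum
has a weak cluster point, which is the minimum point by strictness; the property of `Φ` on weakly
convergent sequences then makes a subsequence converge strongly, which the sphere forbids. -/
lemma exists_barrier [TopologicalSpace.SeparableSpace X]
    (hrefl : Function.Surjective (NormedSpace.inclusionInDoubleDual ℝ X))
    (hΦwlsc : ∀ (u : ℕ → X) (v : X), WeaklyConvergentSeq u v →
      Φ v ≤ liminf (fun n => Φ (u n)) atTop)
    (hΦclassX : ∀ (u : ℕ → X) (v : X), WeaklyConvergentSeq u v →
      liminf (fun n => Φ (u n)) atTop ≤ Φ v →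
      ∃ φ : ℕ → ℕ, StrictMono φ ∧ Tendsto (fun n => u (φ n)) atTop (𝓝 v))
    (hH : CompactC1 H H') {x : X} {r : ℝ} (hr : 0 < r)
    (hmin : ∀ w, ‖w - x‖ ≤ r → w ≠ x → Φ x - H x < Φ w - H w) :
    ∃ ε > 0, ∀ w, ‖w - x‖ = r → Φ x - H x + ε ≤ Φ w - H w := by
  by_contra! hcon
  choose u hur hu using fun n : ℕ => hcon (1 / ((n : ℝ) + 1)) Nat.one_div_pos_of_nat
  have hlim : Tendsto (fun n => Φ (u n) - H (u n)) atTop (𝓝 (Φ x - H x)) := by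
    refine tendsto_of_tendsto_of_tendsto_of_le_of_le tendsto_const_nhds
      (by simpa using tendsto_one_div_add_atTop_nhds_zero_nat.const_add (Φ x - H x))
      (fun n => ?_) (fun n => (hu n).le)
    refine (hmin _ (hur n).le fun h => ?_).le
    have := hur n
    simp [h] at this
    exact hr.ne this
  obtain ⟨v, φ, -, hw, hle, hΦlim⟩ := exists_weak_limit_of_levels hrefl hΦwlsc hH
    (R := r + ‖x‖) (fun n => by
      have := norm_add_le (u n - x) x
      rw [sub_add_cancel, hur] at this
      exact this) hlim
  have hvx : v = x := by
    by_contra hne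
    exact absurd hle (not_le.2 (hmin v (hw.norm_sub_le fun n => (hur _).le) hne))
  subst hvx
  obtain ⟨ψ, -, hψ⟩ := hΦclassX _ _ hw (by
    have : liminf (fun n => Φ ((u ∘ φ) n)) atTop = Φ v - H v + H v := hΦlim.liminf_eq
    linarith)
  have h0 : Tendsto (fun n => ‖(u ∘ φ) (ψ n) - v‖) atTop (𝓝 0) := by
    simpa using (hψ.sub_const v).norm
  have h1 : Tendsto (fun _ : ℕ => r) atTop (𝓝 0) := h0.congr fun n => hur _
  exact hr.ne' (tendsto_nhds_unique tendsto_const_nhds h1)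

/-- Palais–Smale condition for bounded sequences: compactness of `H'` makes `Φ' (u n)` converge along
a subsequence, and the continuous inverse of `Φ'` turns this into convergence of `u n`. -/
lemma exists_critical_of_almost_critical (hΦ'cont : Continuous Φ')
    (hΦ'inv : ∃ T : (X →L[ℝ] ℝ) → X, Continuous T ∧
      Function.LeftInverse T Φ' ∧ Function.RightInverse T Φ')
    (hH : CompactC1 H H') {u : ℕ → X} {R : ℝ} (hu : ∀ n, ‖u n‖ ≤ R)
    (hlim : Tendsto (fun n => Φ' (u n) - H' (u n)) atTop (𝓝 0)) :
    ∃ (v : X) (φ : ℕ → ℕ), Tendsto (u ∘ φ) atTop (𝓝 v) ∧ Φ' v = H' v := by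
  obtain ⟨T, hT, hTl, -⟩ := hΦ'inv
  obtain ⟨f, -, φ, hφ, hf⟩ := (hH.compact (Metric.closedBall 0 R)
    Metric.isBounded_closedBall).tendsto_subseq (x := fun n => H' (u n))
    (fun n => subset_closure ⟨u n, by simpa using hu n, rfl⟩)
  have h1 : Tendsto (fun n => Φ' (u (φ n))) atTop (𝓝 f) := by
    simpa [Function.comp_def] using (hlim.comp hφ.tendsto_atTop).add hf
  have h2 : Tendsto (u ∘ φ) atTop (𝓝 (T f)) :=
    ((hT.tendsto f).comp h1).congr fun n => hTl _
  refine ⟨T f, φ, h2, ?_⟩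
  rw [tendsto_nhds_unique ((hΦ'cont.tendsto _).comp h2) h1,
    tendsto_nhds_unique ((hH.cont.tendsto _).comp h2) hf]

/-- Mountain pass theorem for `Φ - H`, with two-sided bounds on the critical level. -/
lemma exists_mountain_pass_critical [CompleteSpace X]
    (hΦderiv : ∀ u : X, HasFDerivAt Φ (Φ' u) u) (hΦ'cont : Continuous Φ')
    (hΦ'inv : ∃ T : (X →L[ℝ] ℝ) → X, Continuous T ∧
      Function.LeftInverse T Φ' ∧ Function.RightInverse T Φ')
    (hH : CompactC1 H H') {x₀ x₁ : X} {r c M η R : ℝ}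
    (hr : 0 ≤ r) (hη : 0 < η) (hx₁ : r ≤ ‖x₁ - x₀‖)
    (hc : ∀ w, ‖w - x₀‖ = r → c ≤ Φ w - H w) (h0 : Φ x₀ - H x₀ < c - η)
    (h1 : Φ x₁ - H x₁ < c - η) (hM : ∀ w ∈ segment ℝ x₀ x₁, Φ w - H w ≤ M)
    (hR : ∀ w, Φ w - H w ≤ M → ‖w‖ ≤ R) :
    ∃ u, Φ' u = H' u ∧ c - η ≤ Φ u - H u ∧ Φ u - H u ≤ M := by
  have hE : ∀ u, HasFDerivAt (fun w => Φ w - H w) (Φ' u - H' u) u :=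
    fun u => (hΦderiv u).sub (hH.deriv u)
  choose u hu1 hu2 hu3 using fun n : ℕ => exists_almost_critical_mountain_pass hE
    (hΦ'cont.sub hH.cont) hr hη (Nat.one_div_pos_of_nat (n := n) (α := ℝ)) hx₁ hc h0 h1 hM
  obtain ⟨v, φ, hv, hcrit⟩ := exists_critical_of_almost_critical hΦ'cont hΦ'inv hH
    (fun n => hR _ (hu2 n)) (squeeze_zero_norm hu3 tendsto_one_div_add_atTop_nhds_zero_nat)
  have hEv : Tendsto (fun n => Φ (u (φ n)) - H (u (φ n))) atTop (𝓝 (Φ v - H v)) :=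
    ((hE v).continuousAt.tendsto).comp hv
  exact ⟨v, hcrit, ge_of_tendsto' hEv fun n => hu1 _, le_of_tendsto' hEv fun n => hu2 _⟩

lemma critical_of_local_min (hΦderiv : ∀ u : X, HasFDerivAt Φ (Φ' u) u)
    (hH : CompactC1 H H') {x w : X} {r : ℝ} (hw : ‖w - x‖ < r)
    (hmin : ∀ y, ‖y - x‖ ≤ r → Φ w - H w ≤ Φ y - H y) : Φ' w = H' w := by
  have hloc : IsLocalMin (fun u => Φ u - H u) w := by
    have hmem : Metric.ball x r ∈ 𝓝 w :=
      Metric.isOpen_ball.mem_nhds (by rwa [Metric.mem_ball, dist_eq_norm])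
    filter_upwards [hmem] with y hy
    rw [Metric.mem_ball, dist_eq_norm] at hy
    exact hmin y hy.le
  exact sub_eq_zero.1 (hloc.hasFDerivAt_eq_zero ((hΦderiv w).sub (hH.deriv w)))

end CriticalPoints

/-! ### Three critical points -/

/-- Ricceri's three critical points theorem.  Let `X` be a separable
reflexive real Banach space, `I ⊆ ℝ` an interval, `Φ : X → ℝ` a `C¹`, sequentially weakly
lower semicontinuous functional, bounded on bounded sets, belonging to the class `𝒳`
(weak convergence plus `liminf Φ(uₙ) ≤ Φ(u)` forces strong convergence of a subsequence),
whose derivative admits a continuous inverse on `X*`; let `J : X → ℝ` be `C¹` with compact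
derivative.  If for each `λ ∈ I` the functional `Φ - λJ` is coercive and has a strict local,
not global, minimum `û_λ`, then for each compact `[a,b] ⊆ I` on which
`λ ↦ (Φ - λJ)(û_λ)` is bounded above, there is `γ > 0` such that: for every `λ ∈ [a,b]` and
every `C¹` functional `Ψ : X → ℝ` with compact derivative there is `δ₀ > 0` such that for
each `μ ∈ [0, δ₀]` the equation `Φ'(u) = λJ'(u) + μΨ'(u)` has at least three solutions of
norm less than `γ`. -/
theorem ricceri_three_critical_points
    {X : Type*} [NormedAddCommGroup X] [NormedSpace ℝ X] [CompleteSpace X]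
    [TopologicalSpace.SeparableSpace X]
    (hrefl : Function.Surjective (NormedSpace.inclusionInDoubleDual ℝ X))
    (I : Set ℝ) (hI : I.OrdConnected)
    (Φ J : X → ℝ) (Φ' J' : X → X →L[ℝ] ℝ)
    (hΦderiv : ∀ u : X, HasFDerivAt Φ (Φ' u) u) (hΦ'cont : Continuous Φ')
    (hJderiv : ∀ u : X, HasFDerivAt J (J' u) u) (hJ'cont : Continuous J')
    (hΦwlsc : ∀ (u : ℕ → X) (v : X), WeaklyConvergentSeq u v →
      Φ v ≤ liminf (fun n => Φ (u n)) atTop)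
    (hΦclassX : ∀ (u : ℕ → X) (v : X), WeaklyConvergentSeq u v →
      liminf (fun n => Φ (u n)) atTop ≤ Φ v →
      ∃ φ : ℕ → ℕ, StrictMono φ ∧ Tendsto (fun n => u (φ n)) atTop (𝓝 v))
    (hΦbdd : ∀ s : Set X, IsBounded s → IsBounded (Φ '' s))
    (hΦ'inv : ∃ T : (X →L[ℝ] ℝ) → X, Continuous T ∧
      Function.LeftInverse T Φ' ∧ Function.RightInverse T Φ')
    (hJ'compact : ∀ s : Set X, IsBounded s → IsCompact (closure (J' '' s)))
    (uhat : ℝ → X)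
    (hcoercive : ∀ lam ∈ I, ∀ A : ℝ, ∃ R : ℝ, ∀ u : X, R ≤ ‖u‖ →
      A ≤ Φ u - lam * J u)
    (hstrictmin : ∀ lam ∈ I, ∀ᶠ v in 𝓝 (uhat lam), v ≠ uhat lam →
      Φ (uhat lam) - lam * J (uhat lam) < Φ v - lam * J v)
    (hnotglobal : ∀ lam ∈ I, ∃ v : X,
      Φ v - lam * J v < Φ (uhat lam) - lam * J (uhat lam)) :
    ∀ a b : ℝ, a ≤ b → Set.Icc a b ⊆ I →
      BddAbove ((fun lam => Φ (uhat lam) - lam * J (uhat lam)) '' Set.Icc a b) →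
      ∃ γ > 0, ∀ lam ∈ Set.Icc a b,
        ∀ (Ψ : X → ℝ) (Ψ' : X → X →L[ℝ] ℝ),
          (∀ u : X, HasFDerivAt Ψ (Ψ' u) u) → Continuous Ψ' →
          (∀ s : Set X, IsBounded s → IsCompact (closure (Ψ' '' s))) →
          ∃ δ₀ > 0, ∀ μ ∈ Set.Icc (0 : ℝ) δ₀,
            ∃ u₁ u₂ u₃ : X, u₁ ≠ u₂ ∧ u₁ ≠ u₃ ∧ u₂ ≠ u₃ ∧
              (Φ' u₁ = lam • J' u₁ + μ • Ψ' u₁ ∧ ‖u₁‖ < γ) ∧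
              (Φ' u₂ = lam • J' u₂ + μ • Ψ' u₂ ∧ ‖u₂‖ < γ) ∧
              (Φ' u₃ = lam • J' u₃ + μ • Ψ' u₃ ∧ ‖u₃‖ < γ) := by
  intro a b hab hsub ⟨s, hs⟩
  have hJ : CompactC1 J J' := ⟨hJderiv, hJ'cont, hJ'compact⟩
  -- coercivity is uniform on `[a, b]`, since `Φ - λJ ≥ min (Φ - aJ) (Φ - bJ)`
  have hunif : ∀ A : ℝ, ∃ R > 0, ∀ lam ∈ Set.Icc a b, ∀ u, Φ u - lam * J u < A → ‖u‖ < R := by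
    intro A
    obtain ⟨R₁, hR₁⟩ := hcoercive a (hsub (Set.left_mem_Icc.2 hab)) A
    obtain ⟨R₂, hR₂⟩ := hcoercive b (hsub (Set.right_mem_Icc.2 hab)) A
    refine ⟨max 1 (max R₁ R₂), by positivity, fun lam hlam u hu => ?_⟩
    by_contra! hle
    have h1 := hR₁ u ((le_max_left _ _).trans ((le_max_right _ _).trans hle))
    have h2 := hR₂ u ((le_max_right _ _).trans ((le_max_right _ _).trans hle))
    rcases le_total 0 (J u) with h | h
    · nlinarith [hlam.2]
    · nlinarith [hlam.1]
  obtain ⟨R, hR, hRs⟩ := hunif (s + 1)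
  obtain ⟨A, hA⟩ := (hΦbdd _ (Metric.isBounded_closedBall (x := (0 : X)) (r := R))).exists_norm_le
  obtain ⟨B, hB⟩ := hJ.bounded R
  -- a bound for `Φ - λJ` on the ball of radius `R`, uniform in `λ ∈ [a, b]`
  obtain ⟨M, hM⟩ : ∃ M, ∀ lam ∈ Set.Icc a b, ∀ u, ‖u‖ ≤ R → Φ u - lam * J u ≤ M := by
    refine ⟨A + max |a| |b| * B, fun lam hlam u hu => ?_⟩
    have h1 := (le_abs_self _).trans (hA _ ⟨u, by simpa using hu, rfl⟩)
    have h2 : |lam * J u| ≤ max |a| |b| * B := by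
      rw [abs_mul]
      exact mul_le_mul (abs_le_max_abs_abs hlam.1 hlam.2) (hB u hu) (abs_nonneg _) (by positivity)
    linarith [neg_abs_le (lam * J u)]
  obtain ⟨γ, hγ, hγM⟩ := hunif (M + 3)
  refine ⟨γ, hγ, fun lam hlam Ψ Ψ' hΨderiv hΨ'cont hΨ'compact => ?_⟩
  have hΨ : CompactC1 Ψ Ψ' := ⟨hΨderiv, hΨ'cont, hΨ'compact⟩
  have hlamI := hsub hlam
  set x := uhat lam with hx
  set m := Φ x - lam * J x with hm
  have hms : m ≤ s := hs ⟨lam, hlam, rfl⟩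
  have hxR : ‖x‖ < R := hRs lam hlam x (by linarith)
  obtain ⟨v, hv⟩ := hnotglobal lam hlamI
  rw [← hx, ← hm] at hv
  have hvR : ‖v‖ < R := hRs lam hlam v (by linarith)
  -- the strict local minimum is separated by a sphere
  obtain ⟨r, hr, hrmin⟩ : ∃ r > 0, ∀ w, ‖w - x‖ ≤ r → w ≠ x → m < Φ w - lam * J w := by
    obtain ⟨ρ, hρ, hball⟩ := Metric.eventually_nhds_iff.1 (hstrictmin lam hlamI)
    exact ⟨ρ / 2, by positivity, fun w hw hne =>
      hball (by rw [dist_eq_norm]; linarith) hne⟩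
  obtain ⟨ε₀, hε₀, hsphere⟩ := exists_barrier hrefl hΦwlsc hΦclassX (hJ.smul lam) hr hrmin
  have hminball : ∀ w, ‖w - x‖ ≤ r → m ≤ Φ w - lam * J w := by
    intro w hw
    by_cases hne : w = x
    · rw [hne]
    · exact (hrmin w hw hne).le
  have hvr : r < ‖v - x‖ := by
    by_contra! h
    linarith [hminball v h]
  obtain ⟨ε, hε, hε1, hεs, hεv⟩ : ∃ ε > 0, ε ≤ 1 ∧ 3 * ε ≤ ε₀ ∧
      Φ v - lam * J v ≤ m - 3 * ε := by
    refine ⟨min 1 (min (ε₀ / 3) ((m - (Φ v - lam * J v)) / 3)), ?_, min_le_left _ _, ?_, ?_⟩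
    · have : 0 < m - (Φ v - lam * J v) := by linarith
      positivity
    · have := (min_le_right 1 (min (ε₀ / 3) ((m - (Φ v - lam * J v)) / 3))).trans
        (min_le_left _ _)
      linarith
    · have := (min_le_right 1 (min (ε₀ / 3) ((m - (Φ v - lam * J v)) / 3))).trans
        (min_le_right _ _)
      linarith
  -- truncate the perturbation beyond its values on the ball of radius `γ`
  obtain ⟨k, hk⟩ := hΨ.bounded γ
  obtain ⟨g, g', hg, hg', ⟨C, hC⟩, hg1⟩ := exists_truncation k
  have hP := hΨ.comp_left hg hg'
  have hC0 : 0 ≤ C := (abs_nonneg _).trans (hC 0)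
  refine ⟨ε / (C + 1), by positivity, fun μ ⟨hμ0, hμ⟩ => ?_⟩
  have hH := (hJ.smul lam).add (hP.smul μ)
  set H : X → ℝ := fun u => lam * J u + μ * g (Ψ u) with hHdef
  have hclose : ∀ u, |(Φ u - H u) - (Φ u - lam * J u)| ≤ ε := by
    intro u
    have h1 : (Φ u - H u) - (Φ u - lam * J u) = -(μ * g (Ψ u)) := by rw [hHdef]; ring
    rw [h1, abs_neg, abs_mul, abs_of_nonneg hμ0]
    calc μ * |g (Ψ u)| ≤ ε / (C + 1) * (C + 1) := by
          gcongr
          linarith [hC (Ψ u)]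
      _ = ε := by field_simp
  have hup : ∀ u, Φ u - H u ≤ Φ u - lam * J u + ε := fun u => by
    linarith [(abs_le.1 (hclose u)).2]
  have hlo : ∀ u, Φ u - lam * J u - ε ≤ Φ u - H u := fun u => by
    linarith [(abs_le.1 (hclose u)).1]
  have hmM : m ≤ M := hM lam hlam x hxR.le
  -- points at a low level lie in the ball of radius `γ`, where the truncation is inactive
  have hγbound : ∀ u, Φ u - H u ≤ M + 1 → ‖u‖ < γ := fun u hu =>
    hγM lam hlam u (by linarith [hlo u])
  have hsol : ∀ u, Φ' u = lam • J' u + μ • (g' (Ψ u) • Ψ' u) → Φ u - H u ≤ M + 1 →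
      Φ' u = lam • J' u + μ • Ψ' u ∧ ‖u‖ < γ := by
    intro u hu hlev
    have := hγbound u hlev
    rw [hg1 _ (hk u this.le), one_smul] at hu
    exact ⟨hu, this⟩
  -- a local minimum near `x`
  obtain ⟨u₁, hu₁r, hu₁min⟩ := exists_min_closedBall hrefl hΦwlsc hΦbdd hH x hr.le
  have hu₁lev : Φ u₁ - H u₁ ≤ m + ε := (hu₁min x (by simpa using hr.le)).trans (hup x)
  have hu₁lt : ‖u₁ - x‖ < r := by
    refine lt_of_le_of_ne hu₁r fun h => ?_
    have := hsphere u₁ h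
    linarith [hlo u₁]
  -- the minimum over the ball of radius `γ`, which is interior because it is at a low level
  obtain ⟨u₂, hu₂γ, hu₂min⟩ := exists_min_closedBall hrefl hΦwlsc hΦbdd hH 0 hγ.le
  have hvlev : Φ v - H v ≤ m - 2 * ε := by linarith [hup v]
  have hu₂lev : Φ u₂ - H u₂ ≤ m - 2 * ε := by
    refine (hu₂min v ?_).trans hvlev
    rw [sub_zero]
    exact (hγbound v (by linarith)).le
  have hu₂lt : ‖u₂ - 0‖ < γ := by
    rw [sub_zero]
    exact hγbound u₂ (by linarith)
  -- a critical point of mountain pass type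
  obtain ⟨u₃, hu₃, hu₃lo, hu₃up⟩ := exists_mountain_pass_critical hΦderiv hΦ'cont hΦ'inv hH
    (x₀ := x) (x₁ := v) (c := m + 2 * ε) (η := ε / 2) (M := M + ε) (R := γ) hr.le
    (by positivity) hvr.le
    (fun w hw => by
      have := hsphere w hw
      linarith [hlo w])
    (by linarith [hup x]) (by linarith)
    (fun w hw => by
      have : w ∈ Metric.closedBall (0 : X) R := (convex_closedBall 0 R).segment_subset
        (by simpa using hxR.le) (by simpa using hvR.le) hw
      linarith [hup w, hM lam hlam w (by simpa using this)])
    (fun w hw => (hγbound w (by linarith)).le)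
  refine ⟨u₁, u₂, u₃, ?_, ?_, ?_,
    hsol u₁ (critical_of_local_min hΦderiv hH hu₁lt hu₁min) (by linarith),
    hsol u₂ (critical_of_local_min hΦderiv hH hu₂lt hu₂min) (by linarith),
    hsol u₃ hu₃ (by linarith)⟩
  · rintro rfl
    linarith [hlo u₁, hminball u₁ hu₁r]
  · rintro rfl
    linarith
  · rintro rfl
    linarith
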